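/- Let n ≥ 2, let Ω ⊆ ℝⁿ be open, let τ ∈ ℝ, α, β : Fin n → ℝ, and let Φ, F : ℝ → ℝ be smooth. Suppose φ = Φ ∘ q and f = F ∘ q satisfy the conformal soliton system on Ω. Then for every x ∈ Ω for which there exist two distinct indices i ≠ j with 2τ·ε i·xᵢ + α i ≠ 0 and 2τ·ε j·xⱼ + α j ≠ 0, the functions Φ and F satisfy the reduced ODE system at s = q(x). (This is the 'only if' direction of Theorem 1.2.) -/

import Mathlib

noncomputable def pd {n : ℕ} (i : Fin n) (u : (Fin n → ℝ) → ℝ) (x : Fin n → ℝ) : ℝ :=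
  fderiv ℝ u x (Pi.single i 1)

/-- The PDE system characterizing gradient Ricci solitons conformal to
pseudo-Euclidean space (Barbosa–Pina–Tenenblat). -/
def SolitonSystem (n : ℕ) (ε : Fin n → ℝ) (Ω : Set (Fin n → ℝ))
    (φ f : (Fin n → ℝ) → ℝ) (lam : ℝ) : Prop :=
  (∀ i j : Fin n, i ≠ j → ∀ x ∈ Ω,
    ((n : ℝ) - 2) * pd i (pd j φ) x + φ x * pd i (pd j f) x
      + pd i φ x * pd j f x + pd j φ x * pd i f x = 0) ∧
  (∀ i : Fin n, ∀ x ∈ Ω,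
    φ x * (((n : ℝ) - 2) * pd i (pd i φ) x + φ x * pd i (pd i f) x
        + 2 * pd i φ x * pd i f x)
      + ε i * ∑ k, ε k * (φ x * pd k (pd k φ) x - ((n : ℝ) - 1) * (pd k φ x) ^ 2
        - φ x * pd k φ x * pd k f x) = ε i * lam)

/-- The reduced ODE system. -/
def ReducedODE (n : ℕ) (τ Λ lam : ℝ) (Φ F : ℝ → ℝ) (s : ℝ) : Prop :=
  ((n : ℝ) - 2) * deriv (deriv Φ) s + Φ s * deriv (deriv F) s
      + 2 * deriv Φ s * deriv F s = 0 ∧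
  2 * τ * Φ s * (2 * ((n : ℝ) - 1) * deriv Φ s + Φ s * deriv F s)
    + (Φ s * deriv (deriv Φ) s - ((n : ℝ) - 1) * (deriv Φ s) ^ 2
      - Φ s * deriv Φ s * deriv F s) * (4 * τ * s + Λ) = lam

/-!
The chain rule gives `∂ᵢ∂ⱼ(G ∘ g) = G''(g) ∂ᵢg ∂ⱼg + G'(g) ∂ᵢ∂ⱼg`. The Hessian of `q` is
diagonal, so each off-diagonal equation of the soliton system is `∂ᵢq ∂ⱼq` times the left side of
the first ODE and can be divided by this factor where it does not vanish. Once the first ODE holds,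
the terms in `(∂ᵢq)²` drop out of the diagonal equation; what remains depends on `x` only through
`q`, because `∑ₖ εₖ (∂ₖq)² = 4 τ q + Λ`, `∂ᵢ∂ᵢq = 2 τ εᵢ` and `∑ₖ εₖ ∂ₖ∂ₖq = 2 τ n`.
-/

section PartialDerivatives

variable {n : ℕ} {G : ℝ → ℝ} {g : (Fin n → ℝ) → ℝ} {x : Fin n → ℝ}

theorem differentiableAt_pd (hg : ContDiffAt ℝ 2 g x) (i : Fin n) :
    DifferentiableAt ℝ (pd i g) x :=
  ((hg.fderiv_right (m := 1) (by norm_num)).differentiableAt one_ne_zero).clm_apply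
    (differentiableAt_const _)

theorem pd_mul {u v : (Fin n → ℝ) → ℝ} (hu : DifferentiableAt ℝ u x)
    (hv : DifferentiableAt ℝ v x) (i : Fin n) :
    pd i (u * v) x = pd i u x * v x + u x * pd i v x := by
  simp only [pd, fderiv_mul hu hv, add_apply, smul_apply, smul_eq_mul]
  ring

theorem pd_comp (hG : DifferentiableAt ℝ G (g x)) (hg : DifferentiableAt ℝ g x) (i : Fin n) :
    pd i (G ∘ g) x = deriv G (g x) * pd i g x := by
  simp only [pd, (hG.hasDerivAt.comp_hasFDerivAt x hg.hasFDerivAt).fderiv, smul_apply,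
    smul_eq_mul]

theorem pd_pd_comp (hG : ContDiffAt ℝ 2 G (g x)) (hg : ContDiffAt ℝ 2 g x) (i j : Fin n) :
    pd i (pd j (G ∘ g)) x =
      deriv (deriv G) (g x) * pd i g x * pd j g x + deriv G (g x) * pd i (pd j g) x := by
  have pd_comp_eventuallyEq : pd j (G ∘ g) =ᶠ[nhds x] (deriv G ∘ g) * pd j g := by
    filter_upwards [hg.continuousAt.eventually (hG.eventually (by simp)),
      hg.eventually (by simp)] with y hGy hgy
    exact pd_comp (hGy.differentiableAt two_ne_zero) (hgy.differentiableAt two_ne_zero) j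
  have hg' : DifferentiableAt ℝ g x := hg.differentiableAt two_ne_zero
  have hG' : DifferentiableAt ℝ (deriv G) (g x) :=
    (hG.derivWithin (m := 1) (by norm_num)).differentiableAt one_ne_zero
  calc pd i (pd j (G ∘ g)) x
      = pd i ((deriv G ∘ g) * pd j g) x := by rw [pd, pd_comp_eventuallyEq.fderiv_eq, pd]
    _ = pd i (deriv G ∘ g) x * pd j g x + deriv G (g x) * pd i (pd j g) x :=
        pd_mul (hG'.comp x hg') (differentiableAt_pd hg j) i
    _ = _ := by rw [pd_comp hG' hg' i]

theorem pd_comp_apply {p : ℝ → ℝ} {j : Fin n} (hp : DifferentiableAt ℝ p (x j)) (i : Fin n) :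
    pd i (fun y => p (y j)) x = if i = j then deriv p (x j) else 0 := by
  have hproj : pd i (fun y : Fin n → ℝ => y j) x = if i = j then 1 else 0 := by
    simp [pd, fderiv_apply, Pi.single_apply, eq_comm]
  exact (pd_comp (g := fun y => y j) hp (by fun_prop) i).trans (by simp [hproj])

theorem pd_sum_comp_apply {p : Fin n → ℝ → ℝ} (hp : ∀ k, DifferentiableAt ℝ (p k) (x k))
    (i : Fin n) : pd i (fun y => ∑ k, p k (y k)) x = deriv (p i) (x i) := by
  have hpd : pd i (fun y => ∑ k, p k (y k)) x = ∑ k, pd i (fun y => p k (y k)) x := by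
    have hcoord (k : Fin n) : DifferentiableAt ℝ (fun y : Fin n → ℝ => p k (y k)) x :=
      (hp k).comp x (by fun_prop : DifferentiableAt ℝ (fun y : Fin n → ℝ => y k) x)
    simp only [pd, fderiv_fun_sum fun k _ => hcoord k, sum_apply]
  simp [hpd, pd_comp_apply (hp _)]

end PartialDerivatives

section SeparableQuadratic

variable {n : ℕ} (a b c : Fin n → ℝ)

/-- The quadratic polynomial `∑ₖ (aₖ xₖ² + bₖ xₖ + cₖ)` without mixed terms. The function `q` of the
theorem is the case `a = τ • ε`, `b = α`, `c = β`. -/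
def separableQuadratic (x : Fin n → ℝ) : ℝ :=
  ∑ k, (a k * x k ^ 2 + b k * x k + c k)

theorem contDiff_separableQuadratic {m : WithTop ℕ∞} : ContDiff ℝ m (separableQuadratic a b c) := by
  unfold separableQuadratic
  fun_prop

theorem pd_separableQuadratic (i : Fin n) (x : Fin n → ℝ) :
    pd i (separableQuadratic a b c) x = 2 * a i * x i + b i := by
  have hderiv (t : ℝ) : deriv (fun s => a i * s ^ 2 + b i * s + c i) t = 2 * a i * t + b i := by
    have hsq := ((hasDerivAt_id' t).pow 2).const_mul (a i)
    refine ((hsq.add ((hasDerivAt_id' t).const_mul (b i))).add_const (c i)).deriv.trans ?_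
    push_cast
    ring
  exact (pd_sum_comp_apply (p := fun k t => a k * t ^ 2 + b k * t + c k)
    (fun _ => by fun_prop) i).trans (hderiv _)

theorem pd_pd_separableQuadratic (i j : Fin n) (x : Fin n → ℝ) :
    pd i (pd j (separableQuadratic a b c)) x = if i = j then 2 * a j else 0 := by
  rw [funext (pd_separableQuadratic a b c j),
    pd_comp_apply (p := fun t => 2 * a j * t + b j) (by fun_prop)]
  simp

theorem sum_mul_pd_separableQuadratic_sq {ε : Fin n → ℝ} (hε : ∀ k, ε k ^ 2 = 1) (τ : ℝ)
    (x : Fin n → ℝ) :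
    ∑ k, ε k * pd k (separableQuadratic (τ • ε) b c) x ^ 2 =
      4 * τ * separableQuadratic (τ • ε) b c x + ∑ k, (ε k * b k ^ 2 - 4 * τ * c k) := by
  simp only [pd_separableQuadratic, separableQuadratic, Pi.smul_apply, smul_eq_mul,
    Finset.mul_sum, ← Finset.sum_add_distrib]
  refine Finset.sum_congr rfl fun k _ => ?_
  linear_combination (4 * τ ^ 2 * ε k * x k ^ 2 + 4 * τ * x k * b k) * hε k

theorem sum_mul_pd_pd_separableQuadratic {ε : Fin n → ℝ} (hε : ∀ k, ε k ^ 2 = 1) (τ : ℝ)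
    (x : Fin n → ℝ) :
    ∑ k, ε k * pd k (pd k (separableQuadratic (τ • ε) b c)) x = 2 * τ * n := by
  have hterm (k : Fin n) : ε k * (2 * (τ * ε k)) = 2 * τ := by
    linear_combination 2 * τ * hε k
  simp only [pd_pd_separableQuadratic, if_true, Pi.smul_apply, smul_eq_mul, hterm, Finset.sum_const,
    Finset.card_univ, Fintype.card_fin, nsmul_eq_mul]
  ring

end SeparableQuadratic

section Reduction

/-- The left side of the first reduced equation, in dimension `n`. It is the coefficient of
`∂ᵢg ∂ⱼg` that the terms of the soliton system for `Φ ∘ g` and `F ∘ g` outside the sum over `k`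
produce. -/
noncomputable def hessianCoeff (n : ℕ) (Φ F : ℝ → ℝ) (s : ℝ) : ℝ :=
  ((n : ℝ) - 2) * deriv (deriv Φ) s + Φ s * deriv (deriv F) s + 2 * deriv Φ s * deriv F s

/-- The factor of `4 τ s + Λ` in the second reduced equation, in dimension `n`. It is the
coefficient of `∑ₖ εₖ (∂ₖg)²` that the sum over `k` in the soliton system for `Φ ∘ g` and `F ∘ g`
produces. -/
noncomputable def traceCoeff (n : ℕ) (Φ F : ℝ → ℝ) (s : ℝ) : ℝ :=
  Φ s * deriv (deriv Φ) s - ((n : ℝ) - 1) * deriv Φ s ^ 2 - Φ s * deriv Φ s * deriv F s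

variable {n : ℕ} {ε : Fin n → ℝ} {Ω : Set (Fin n → ℝ)} {lam : ℝ} {Φ F : ℝ → ℝ}
  {g : (Fin n → ℝ) → ℝ} {x : Fin n → ℝ}

theorem hessian_terms_comp (hΦ : ContDiffAt ℝ 2 Φ (g x)) (hF : ContDiffAt ℝ 2 F (g x))
    (hg : ContDiffAt ℝ 2 g x) (i j : Fin n) :
    ((n : ℝ) - 2) * pd i (pd j (Φ ∘ g)) x + Φ (g x) * pd i (pd j (F ∘ g)) x
        + pd i (Φ ∘ g) x * pd j (F ∘ g) x + pd j (Φ ∘ g) x * pd i (F ∘ g) x =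
      hessianCoeff n Φ F (g x) * (pd i g x * pd j g x)
        + (((n : ℝ) - 2) * deriv Φ (g x) + Φ (g x) * deriv F (g x)) * pd i (pd j g) x := by
  have hg' := hg.differentiableAt two_ne_zero
  simp only [pd_pd_comp hΦ hg, pd_pd_comp hF hg, pd_comp (hΦ.differentiableAt two_ne_zero) hg',
    pd_comp (hF.differentiableAt two_ne_zero) hg', hessianCoeff]
  ring

theorem sum_trace_terms_comp (hΦ : ContDiffAt ℝ 2 Φ (g x)) (hF : DifferentiableAt ℝ F (g x))
    (hg : ContDiffAt ℝ 2 g x) (ε : Fin n → ℝ) :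
    ∑ k, ε k * (Φ (g x) * pd k (pd k (Φ ∘ g)) x - ((n : ℝ) - 1) * pd k (Φ ∘ g) x ^ 2
        - Φ (g x) * pd k (Φ ∘ g) x * pd k (F ∘ g) x) =
      traceCoeff n Φ F (g x) * ∑ k, ε k * pd k g x ^ 2
        + Φ (g x) * deriv Φ (g x) * ∑ k, ε k * pd k (pd k g) x := by
  have hg' := hg.differentiableAt two_ne_zero
  simp only [pd_pd_comp hΦ hg, pd_comp (hΦ.differentiableAt two_ne_zero) hg', pd_comp hF hg',
    traceCoeff, Finset.mul_sum, ← Finset.sum_add_distrib]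
  exact Finset.sum_congr rfl fun k _ => by ring

theorem SolitonSystem.hessianCoeff_eq_zero (h : SolitonSystem n ε Ω (Φ ∘ g) (F ∘ g) lam)
    (hx : x ∈ Ω) (hΦ : ContDiffAt ℝ 2 Φ (g x)) (hF : ContDiffAt ℝ 2 F (g x))
    (hg : ContDiffAt ℝ 2 g x) {i j : Fin n} (hij : i ≠ j) (hgij : pd i (pd j g) x = 0)
    (hi : pd i g x ≠ 0) (hj : pd j g x ≠ 0) : hessianCoeff n Φ F (g x) = 0 := by
  have hprod : hessianCoeff n Φ F (g x) * (pd i g x * pd j g x) = 0 := by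
    simpa only [Function.comp_apply, hessian_terms_comp hΦ hF hg, hgij, mul_zero, add_zero]
      using h.1 i j hij x hx
  exact (mul_eq_zero.1 hprod).resolve_right (mul_ne_zero hi hj)

theorem SolitonSystem.diagonal_of_hessianCoeff_eq_zero
    (h : SolitonSystem n ε Ω (Φ ∘ g) (F ∘ g) lam)
    (hx : x ∈ Ω) (hΦ : ContDiffAt ℝ 2 Φ (g x)) (hF : ContDiffAt ℝ 2 F (g x))
    (hg : ContDiffAt ℝ 2 g x) (hcoeff : hessianCoeff n Φ F (g x) = 0) (i : Fin n) :
    Φ (g x) * ((((n : ℝ) - 2) * deriv Φ (g x) + Φ (g x) * deriv F (g x)) * pd i (pd i g) x)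
      + ε i * (traceCoeff n Φ F (g x) * ∑ k, ε k * pd k g x ^ 2
        + Φ (g x) * deriv Φ (g x) * ∑ k, ε k * pd k (pd k g) x) = ε i * lam := by
  have hdiag := h.2 i x hx
  have hhess := hessian_terms_comp hΦ hF hg i i
  rw [hcoeff] at hhess
  simp only [Function.comp_apply,
    sum_trace_terms_comp hΦ (hF.differentiableAt two_ne_zero) hg ε] at hdiag
  linear_combination hdiag - Φ (g x) * hhess

end Reduction

theorem stmt_1_general {n : ℕ} {ε : Fin n → ℝ} (hε : ∀ k, ε k = 1 ∨ ε k = -1)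
    {Ω : Set (Fin n → ℝ)} {τ lam : ℝ} {α β : Fin n → ℝ} {Φ F : ℝ → ℝ} {q : (Fin n → ℝ) → ℝ}
    (hq : ∀ x, q x = ∑ k, (τ * ε k * (x k) ^ 2 + α k * x k + β k))
    {Λ : ℝ} (hΛ : Λ = ∑ k, (ε k * (α k) ^ 2 - 4 * τ * β k))
    (hSol : SolitonSystem n ε Ω (Φ ∘ q) (F ∘ q) lam) {x : Fin n → ℝ} (hx : x ∈ Ω)
    (hΦ : ContDiffAt ℝ 2 Φ (q x)) (hF : ContDiffAt ℝ 2 F (q x))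
    (hgrad : ∃ i j : Fin n, i ≠ j ∧
      2 * τ * ε i * x i + α i ≠ 0 ∧ 2 * τ * ε j * x j + α j ≠ 0) :
    ReducedODE n τ Λ lam Φ F (q x) := by
  obtain rfl : q = separableQuadratic (τ • ε) α β := funext hq
  obtain ⟨i, j, hij, hi, hj⟩ := hgrad
  have hε_sq (k : Fin n) : ε k ^ 2 = 1 := sq_eq_one_iff.2 (hε k)
  have hq2 : ContDiffAt ℝ 2 (separableQuadratic (τ • ε) α β) x :=
    (contDiff_separableQuadratic _ _ _).contDiffAt
  have hO1 : hessianCoeff n Φ F (separableQuadratic (τ • ε) α β x) = 0 :=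
    hSol.hessianCoeff_eq_zero hx hΦ hF hq2 hij (by rw [pd_pd_separableQuadratic, if_neg hij])
      (by simpa [pd_separableQuadratic, mul_assoc] using hi)
      (by simpa [pd_separableQuadratic, mul_assoc] using hj)
  have hdiag := hSol.diagonal_of_hessianCoeff_eq_zero hx hΦ hF hq2 hO1 i
  rw [pd_pd_separableQuadratic, if_pos rfl, sum_mul_pd_separableQuadratic_sq α β hε_sq, ← hΛ,
    sum_mul_pd_pd_separableQuadratic α β hε_sq, Pi.smul_apply, smul_eq_mul, traceCoeff] at hdiag
  have hεi : ε i ≠ 0 := by intro h; simpa [h] using hε_sq i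
  refine ⟨hO1, mul_left_cancel₀ hεi ?_⟩
  linear_combination hdiag

/-- **Theorem 1.2, "only if" direction.** If `φ = Φ ∘ q`, `f = F ∘ q` satisfy the conformal
soliton system on `Ω`, then at every point where at least two components of the gradient of
`q` are nonzero, `Φ` and `F` satisfy the reduced ODE system at `s = q x`. -/
theorem stmt_1 (n : ℕ) (hn : 2 ≤ n) (ε : Fin n → ℝ)
    (hε : ∀ k, ε k = 1 ∨ ε k = -1)
    (Ω : Set (Fin n → ℝ)) (hΩ : IsOpen Ω)
    (τ lam : ℝ) (α β : Fin n → ℝ)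
    (Φ F : ℝ → ℝ) (hΦ : ContDiff ℝ (⊤ : ℕ∞) Φ) (hF : ContDiff ℝ (⊤ : ℕ∞) F)
    (q : (Fin n → ℝ) → ℝ)
    (hq : ∀ x, q x = ∑ k, (τ * ε k * (x k) ^ 2 + α k * x k + β k))
    (Λ : ℝ) (hΛ : Λ = ∑ k, (ε k * (α k) ^ 2 - 4 * τ * β k))
    (hSol : SolitonSystem n ε Ω (Φ ∘ q) (F ∘ q) lam) :
    ∀ x ∈ Ω, (∃ i j : Fin n, i ≠ j ∧
        2 * τ * ε i * x i + α i ≠ 0 ∧ 2 * τ * ε j * x j + α j ≠ 0) →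
      ReducedODE n τ Λ lam Φ F (q x) := by
  intro x hx hgrad
  exact stmt_1_general hε hq hΛ hSol hx (contDiff_infty.1 hΦ 2).contDiffAt
    (contDiff_infty.1 hF 2).contDiffAt hgrad
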